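/- The real polynomial Bohnenblust–Hille constants satisfy limsup_{m→∞} D_{ℝ,m}^{1/m} ≤ 2; equivalently, for every ε > 0 there is a constant C_ε > 0 such that D_{ℝ,m} ≤ C_ε (2+ε)^m for all positive integers m. -/

import Mathlib

open MvPolynomial Filter

/-- The sup norm of a real polynomial in `n` variables over the cube `[-1,1]^n`. -/
noncomputable def supNorm {n : ℕ} (P : MvPolynomial (Fin n) ℝ) : ℝ :=
  sSup {y : ℝ | ∃ x : Fin n → ℝ, (∀ i, |x i| ≤ 1) ∧ y = |eval x P|}

/-- The `ℓ_p` norm of the coefficients of a real polynomial. -/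
noncomputable def lpNorm {n : ℕ} (p : ℝ) (P : MvPolynomial (Fin n) ℝ) : ℝ :=
  (∑ α ∈ P.support, |coeff α P| ^ p) ^ (1 / p)

/-- The real polynomial Bohnenblust–Hille constant `D_{ℝ,m}`. -/
noncomputable def BHconst (m : ℕ) : ℝ :=
  sInf {D : ℝ | 0 < D ∧ ∀ (n : ℕ) (P : MvPolynomial (Fin n) ℝ),
    P.IsHomogeneous m → lpNorm (2 * m / (m + 1)) P ≤ D * supNorm P}

/-- The real polynomial Bohnenblust–Hille constant `D_{ℝ,m}(n)` in a fixed number `n`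
of variables. -/
noncomputable def BHconstN (m n : ℕ) : ℝ :=
  sInf {D : ℝ | 0 < D ∧ ∀ P : MvPolynomial (Fin n) ℝ,
    P.IsHomogeneous m → lpNorm (2 * m / (m + 1)) P ≤ D * supNorm P}

/-!
A polynomial of degree `m` is treated as a symmetric `m`-linear form, whose coefficients are
indexed by `m`-tuples of variables. Split the variables of a monomial into blocks of `k` and
`d = m - k`. For fixed values of the `d` variables, on the torus, apply the Bohnenblust–Hille
inequality in degree `k`; the `ℓ₂` sum over the `d` variables is recovered from an average over
the torus at the cost of a Khinchin constant `2 ^ (d / k)`, because the `L₄` norm of a polynomial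
of degree `d` is at most `2 ^ (d / 2)` times its `L₂` norm. Cauchy estimates bound polarization by
a power `m ^ k`. Blei's interpolation merges the mixed estimates for two block lengths `k` and `l`
into one for `k + l` without any loss, so the estimates for `k₀ ≤ k < 2 * k₀` yield the one for
`k = m`, with constant `C * m ^ (3 * k₀) * 2 ^ (m / k₀)`. Complexification of a real polynomial
costs `2 ^ m`, and taking `k₀` large leaves the growth rate `2`.
-/

namespace BohnenblustHille

open scoped BigOperators ComplexConjugate
open Finset (HasAntidiagonal)

section Inequalities

variable {ι κ : Type*}

theorem sum_rpow_mul_rpow_le (s : Finset ι) {x y : ι → ℝ} (hx : ∀ i ∈ s, 0 ≤ x i)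
    (hy : ∀ i ∈ s, 0 ≤ y i) {a b : ℝ} (ha : 0 < a) (hb : 0 < b) (hab : a + b = 1) :
    ∑ i ∈ s, x i ^ a * y i ^ b ≤ (∑ i ∈ s, x i) ^ a * (∑ i ∈ s, y i) ^ b := by
  have hconj : a⁻¹.HolderConjugate b⁻¹ := ⟨by simpa using hab, inv_pos.2 ha, inv_pos.2 hb⟩
  have hölder := Real.inner_le_Lp_mul_Lq_of_nonneg s hconj
    (fun i hi => Real.rpow_nonneg (hx i hi) a) (fun i hi => Real.rpow_nonneg (hy i hi) b)
  rwa [Finset.sum_congr rfl fun i hi => Real.rpow_rpow_inv (hx i hi) ha.ne',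
    Finset.sum_congr rfl fun i hi => Real.rpow_rpow_inv (hy i hi) hb.ne', one_div, one_div,
    inv_inv, inv_inv] at hölder

theorem expect_rpow_mul_rpow_le (s : Finset ι) {x y : ι → ℝ} (hx : ∀ i ∈ s, 0 ≤ x i)
    (hy : ∀ i ∈ s, 0 ≤ y i) {a b : ℝ} (ha : 0 < a) (hb : 0 < b) (hab : a + b = 1) :
    𝔼 i ∈ s, x i ^ a * y i ^ b ≤ (𝔼 i ∈ s, x i) ^ a * (𝔼 i ∈ s, y i) ^ b := by
  have hcard : ((s.card : ℝ)) ^ a * (s.card : ℝ) ^ b = s.card := by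
    rw [← Real.rpow_add_of_nonneg s.card.cast_nonneg ha.le hb.le, hab, Real.rpow_one]
  simp only [Finset.expect_eq_sum_div_card]
  rw [Real.div_rpow (Finset.sum_nonneg hx) s.card.cast_nonneg,
    Real.div_rpow (Finset.sum_nonneg hy) s.card.cast_nonneg, div_mul_div_comm, hcard]
  gcongr
  exact sum_rpow_mul_rpow_le s hx hy ha hb hab

theorem expect_rpow_le_of_expect_sq_le (s : Finset ι) {G : ι → ℝ} (hG : ∀ i ∈ s, 0 ≤ G i)
    {D p : ℝ} (hD : 0 ≤ D) (hp0 : 0 < p) (hp1 : p < 1)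
    (hsq : 𝔼 i ∈ s, G i ^ 2 ≤ D * (𝔼 i ∈ s, G i) ^ 2) :
    (𝔼 i ∈ s, G i) ^ p ≤ D ^ (1 - p) * 𝔼 i ∈ s, G i ^ p := by
  have h2p : 0 < 2 - p := by linarith
  set X := 𝔼 i ∈ s, G i
  set Y := 𝔼 i ∈ s, G i ^ p
  have hX : 0 ≤ X := Finset.expect_nonneg hG
  have hY : 0 ≤ Y := Finset.expect_nonneg fun i hi => Real.rpow_nonneg (hG i hi) p
  have hölder : X ≤ Y ^ (1 / (2 - p)) * (D * X ^ 2) ^ ((1 - p) / (2 - p)) := by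
    have hsplit : ∀ i ∈ s,
        (G i ^ p) ^ (1 / (2 - p)) * (G i ^ 2) ^ ((1 - p) / (2 - p)) = G i := fun i hi => by
      have hexp : p * (1 / (2 - p)) + 2 * ((1 - p) / (2 - p)) = 1 := by field_simp; ring
      rw [← Real.rpow_two, ← Real.rpow_mul (hG i hi), ← Real.rpow_mul (hG i hi),
        ← Real.rpow_add' (hG i hi) (by rw [hexp]; exact one_ne_zero), hexp, Real.rpow_one]
    calc X = 𝔼 i ∈ s, (G i ^ p) ^ (1 / (2 - p)) * (G i ^ 2) ^ ((1 - p) / (2 - p)) :=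
          (Finset.expect_congr rfl hsplit).symm
      _ ≤ Y ^ (1 / (2 - p)) * (𝔼 i ∈ s, G i ^ 2) ^ ((1 - p) / (2 - p)) :=
          expect_rpow_mul_rpow_le s (fun i hi => Real.rpow_nonneg (hG i hi) p)
            (fun i _ => sq_nonneg _) (by positivity) (div_pos (by linarith) h2p)
            (by field_simp; ring)
      _ ≤ _ := by gcongr
  obtain hX0 | hX0 := hX.eq_or_lt
  · rw [← hX0, Real.zero_rpow hp0.ne']
    positivity
  have hpow : X ^ p * X ^ (2 * (1 - p)) ≤ D ^ (1 - p) * Y * X ^ (2 * (1 - p)) := by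
    calc X ^ p * X ^ (2 * (1 - p)) = X ^ (2 - p) := by
          rw [← Real.rpow_add hX0]; congr 1; ring
      _ ≤ (Y ^ (1 / (2 - p)) * (D * X ^ 2) ^ ((1 - p) / (2 - p))) ^ (2 - p) := by gcongr
      _ = D ^ (1 - p) * Y * X ^ (2 * (1 - p)) := by
          rw [Real.mul_rpow (by positivity) (by positivity), ← Real.rpow_mul hY,
            ← Real.rpow_mul (by positivity), div_mul_cancel₀ _ h2p.ne',
            div_mul_cancel₀ _ h2p.ne', Real.rpow_one, Real.mul_rpow hD (by positivity),
            Real.rpow_mul hX 2, Real.rpow_two]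
          ring
  exact le_of_mul_le_mul_right hpow (by positivity)

theorem Lp_sum_le_sum_Lp (s : Finset ι) (t : Finset κ) {G : ι → κ → ℝ} (hG : ∀ i j, 0 ≤ G i j)
    {p : ℝ} (hp : 1 ≤ p) :
    (∑ i ∈ s, (∑ j ∈ t, G i j) ^ p) ^ (1 / p) ≤ ∑ j ∈ t, (∑ i ∈ s, G i j ^ p) ^ (1 / p) := by
  classical
  have hp0 : p ≠ 0 := by positivity
  induction t using Finset.induction_on with
  | empty => simp [Real.zero_rpow hp0, Real.zero_rpow (inv_ne_zero hp0)]
  | insert j t hj ih =>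
    simp only [Finset.sum_insert hj]
    refine (Real.Lp_add_le_of_nonneg s hp (fun i _ => hG i j)
      (fun i _ => Finset.sum_nonneg fun _ _ => hG i _)).trans ?_
    gcongr

variable [Fintype ι] [Fintype κ] {H : ι → κ → ℝ} {k l : ℝ}

theorem sum_sum_rpow_le_mul (hH : ∀ i j, 0 ≤ H i j) (hk : 0 < k) (hl : 0 < l) :
    ∑ i, ∑ j, H i j ^ ((k + l) / (k + l + 1)) ≤
      (∑ i, (∑ j, H i j) ^ (k / (k + 1))) ^ ((k + 1) / (k + l + 1)) *
        (∑ i, (∑ j, H i j ^ (l / (l + 1))) ^ ((l + 1) / l)) ^ (l / (k + l + 1)) := by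
  have hHl : ∀ i j, 0 ≤ H i j ^ (l / (l + 1)) := fun i j => Real.rpow_nonneg (hH i j) _
  have hA : ∀ i, 0 ≤ ∑ j, H i j := fun i => Finset.sum_nonneg fun j _ => hH i j
  have hB : ∀ i, 0 ≤ ∑ j, H i j ^ (l / (l + 1)) := fun i => Finset.sum_nonneg fun j _ => hHl i j
  calc ∑ i, ∑ j, H i j ^ ((k + l) / (k + l + 1))
      = ∑ i, ∑ j, H i j ^ (k / (k + l + 1)) *
          (H i j ^ (l / (l + 1))) ^ ((l + 1) / (k + l + 1)) := by
        refine Finset.sum_congr rfl fun i _ => Finset.sum_congr rfl fun j _ => ?_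
        rw [← Real.rpow_mul (hH i j),
          ← Real.rpow_add_of_nonneg (hH i j) (by positivity) (by positivity)]
        congr 1
        field_simp
    _ ≤ ∑ i, (∑ j, H i j) ^ (k / (k + l + 1)) *
          (∑ j, H i j ^ (l / (l + 1))) ^ ((l + 1) / (k + l + 1)) :=
        Finset.sum_le_sum fun i _ => sum_rpow_mul_rpow_le _ (fun j _ => hH i j)
          (fun j _ => hHl i j) (by positivity) (by positivity) (by field_simp; ring)
    _ = ∑ i, ((∑ j, H i j) ^ (k / (k + 1))) ^ ((k + 1) / (k + l + 1)) *
          ((∑ j, H i j ^ (l / (l + 1))) ^ ((l + 1) / l)) ^ (l / (k + l + 1)) := by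
        refine Finset.sum_congr rfl fun i _ => ?_
        rw [← Real.rpow_mul (hA i), ← Real.rpow_mul (hB i)]
        congr 2 <;> field_simp
    _ ≤ _ := sum_rpow_mul_rpow_le _ (fun i _ => Real.rpow_nonneg (hA i) _)
        (fun i _ => Real.rpow_nonneg (hB i) _) (by positivity) (by positivity) (by field_simp; ring)

theorem sum_sum_rpow_le (hH : ∀ i j, 0 ≤ H i j) (hk : 0 < k) (hl : 0 < l) {R : ℝ} (hR : 0 ≤ R)
    (hrow : ∑ i, (∑ j, H i j) ^ (k / (k + 1)) ≤ R ^ (k / (k + 1)))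
    (hcol : ∑ j, (∑ i, H i j) ^ (l / (l + 1)) ≤ R ^ (l / (l + 1))) :
    ∑ i, ∑ j, H i j ^ ((k + l) / (k + l + 1)) ≤ R ^ ((k + l) / (k + l + 1)) := by
  have hHl : ∀ i j, 0 ≤ H i j ^ (l / (l + 1)) := fun i j => Real.rpow_nonneg (hH i j) _
  have hA : ∀ i, 0 ≤ ∑ j, H i j := fun i => Finset.sum_nonneg fun j _ => hH i j
  have hB : 0 ≤ ∑ i, (∑ j, H i j ^ (l / (l + 1))) ^ ((l + 1) / l) :=
    Finset.sum_nonneg fun i _ => Real.rpow_nonneg (Finset.sum_nonneg fun j _ => hHl i j) _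
  have minkowski : ∑ i, (∑ j, H i j ^ (l / (l + 1))) ^ ((l + 1) / l) ≤ R := by
    have h := Lp_sum_le_sum_Lp Finset.univ Finset.univ hHl (p := (l + 1) / l)
      (by rw [le_div_iff₀ hl]; linarith)
    have hexp : l / (l + 1) * ((l + 1) / l) = 1 := by field_simp
    simp only [← Real.rpow_mul (hH _ _), hexp, Real.rpow_one, one_div_div] at h
    exact (Real.rpow_le_rpow_iff hB hR (by positivity)).1 (h.trans hcol)
  calc ∑ i, ∑ j, H i j ^ ((k + l) / (k + l + 1))
      ≤ (∑ i, (∑ j, H i j) ^ (k / (k + 1))) ^ ((k + 1) / (k + l + 1)) *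
        (∑ i, (∑ j, H i j ^ (l / (l + 1))) ^ ((l + 1) / l)) ^ (l / (k + l + 1)) :=
        sum_sum_rpow_le_mul hH hk hl
    _ ≤ (R ^ (k / (k + 1))) ^ ((k + 1) / (k + l + 1)) * R ^ (l / (k + l + 1)) := by
        gcongr
        exact Finset.sum_nonneg fun i _ => Real.rpow_nonneg (hA i) _
    _ = R ^ ((k + l) / (k + l + 1)) := by
        rw [← Real.rpow_mul hR, ← Real.rpow_add_of_nonneg hR (by positivity) (by positivity)]
        congr 1
        field_simp

end Inequalities

section Tuples

variable {σ : Type*} {k d : ℕ}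

/-- The exponent of the monomial `∏ j, X (t j)` attached to a tuple of indices `t`. Summing over
tuples instead of exponents makes the blocks of variables of a monomial independent. -/
noncomputable def exponent (t : Fin d → σ) : σ →₀ ℕ :=
  ∑ j, Finsupp.single (t j) 1

theorem degree_exponent (t : Fin d → σ) : (exponent t).degree = d := by
  simp [exponent]

theorem exponent_append (u : Fin k → σ) (v : Fin d → σ) :
    exponent (Fin.append u v) = exponent u + exponent v := by
  simp [exponent, Fin.sum_univ_add]

theorem multinomial_add_le (γ β : σ →₀ ℕ) :
    (γ + β).multinomial ≤ (γ.degree + β.degree) ^ γ.degree * β.multinomial := by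
  have hβ : β.support ⊆ (γ + β).support := Finsupp.support_mono le_add_self
  have hβdeg : ∑ i ∈ (γ + β).support, β i = β.degree :=
    (Finsupp.sum_of_support_subset β hβ (fun _ a => a) fun _ _ => rfl).symm
  have hsum : (∏ i ∈ (γ + β).support, ((γ + β) i).factorial) * (γ + β).multinomial =
      (γ.degree + β.degree).factorial := by
    rw [Finsupp.multinomial_eq, ← map_add]
    exact Nat.multinomial_spec _ _
  have hsumβ := Nat.multinomial_spec (γ + β).support β
  rw [hβdeg, Finsupp.multinomial_of_support_subset hβ] at hsumβ
  have hprod : ∏ i ∈ (γ + β).support, (β i).factorial ≤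
      ∏ i ∈ (γ + β).support, ((γ + β) i).factorial :=
    Finset.prod_le_prod' fun i _ => Nat.factorial_le le_add_self
  refine Nat.le_of_mul_le_mul_left ?_
    (Finset.prod_pos fun i (_ : i ∈ (γ + β).support) => Nat.factorial_pos ((γ + β) i))
  calc (∏ i ∈ (γ + β).support, ((γ + β) i).factorial) * (γ + β).multinomial
      = β.degree.factorial * (γ.degree + β.degree).descFactorial γ.degree := by
        rw [hsum, ← Nat.factorial_mul_descFactorial (Nat.le_add_right _ _), Nat.add_sub_cancel_left]
    _ ≤ β.degree.factorial * (γ.degree + β.degree) ^ γ.degree :=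
        Nat.mul_le_mul_left _ (Nat.descFactorial_le_pow _ _)
    _ ≤ _ := by rw [← hsumβ, mul_assoc, mul_comm β.multinomial]; gcongr

theorem sum_exponent_add [Fintype σ] {E : Type*} [AddCommMonoid E] (F : (σ →₀ ℕ) → E) :
    ∑ t : Fin (k + d) → σ, F (exponent t) =
      ∑ u : Fin k → σ, ∑ v : Fin d → σ, F (exponent u + exponent v) := by
  rw [← Fintype.sum_prod_type', ← (Fin.appendEquiv k d).sum_comp]
  exact Fintype.sum_congr _ _ fun x => congrArg F (exponent_append x.1 x.2)

theorem sum_smul_X_pow {R : Type*} [CommSemiring R] [Fintype σ] (z : σ → R) (d : ℕ) :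
    (∑ i, z i • X i : MvPolynomial σ R) ^ d =
      ∑ t : Fin d → σ, monomial (exponent t) (∏ j, z (t j)) := by
  rw [Fintype.sum_pow]
  refine Fintype.sum_congr _ _ fun t => ?_
  rw [Finset.prod_smul, exponent, ← mul_one (∏ j, z (t j)), ← smul_eq_mul, ← smul_monomial,
    monomial_sum_one, smul_eq_mul, mul_one]
  rfl

theorem eval_monomial_exponent {R : Type*} [CommSemiring R] (t : Fin d → σ) (z : σ → R) (c : R) :
    eval z (monomial (exponent t) c) = c * ∏ j, z (t j) := by
  rw [← mul_one c, ← smul_eq_mul, ← smul_monomial, exponent, monomial_sum_one, smul_eval,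
    map_prod, smul_eq_mul, mul_one]
  exact congrArg (c * ·) (Fintype.prod_congr _ _ fun j => eval_X (t j))

theorem card_exponent_eq [Fintype σ] [DecidableEq σ] {α : σ →₀ ℕ} (hα : α.degree = d) :
    Fintype.card {t : Fin d → σ // exponent t = α} = α.multinomial := by
  have h := coeff_linearCombination_X_pow_of_fintype (1 : σ → ℕ) α d
  rw [sum_smul_X_pow, coeff_sum, if_pos (by exact hα)] at h
  simpa [coeff_monomial, Fintype.card_subtype] using h

theorem sum_exponent [Fintype σ] [DecidableEq σ] {E : Type*} [AddCommMonoid E]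
    (F : (σ →₀ ℕ) → E) :
    ∑ t : Fin d → σ, F (exponent t) =
      ∑ α ∈ Finset.univ.finsuppAntidiag d, α.multinomial • F α := by
  have hmem : ∀ t ∈ (Finset.univ : Finset (Fin d → σ)),
      exponent t ∈ Finset.univ.finsuppAntidiag d := fun t _ => by
    rw [Finset.mem_finsuppAntidiag]
    exact ⟨(Finsupp.degree_eq_sum _).symm.trans (degree_exponent t), Finset.subset_univ _⟩
  rw [← Finset.sum_fiberwise_of_maps_to hmem]
  refine Finset.sum_congr rfl fun α hα => ?_
  rw [Finset.mem_finsuppAntidiag, ← Finsupp.degree_eq_sum] at hα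
  rw [Finset.sum_congr rfl fun t ht => congrArg F (Finset.mem_filter.1 ht).2, Finset.sum_const,
    ← card_exponent_eq hα.1, Fintype.card_subtype]

end Tuples

section CoeffNorm

variable {σ : Type*}

/-- The squared `ℓ₂` norm of the coefficients of a complex polynomial, which is also its squared
`L₂` norm on the torus. -/
noncomputable def coeffNormSq (p : MvPolynomial σ ℂ) : ℝ := ∑ α ∈ p.support, ‖coeff α p‖ ^ 2

theorem coeffNormSq_nonneg (p : MvPolynomial σ ℂ) : 0 ≤ coeffNormSq p :=
  Finset.sum_nonneg fun _ _ => by positivity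

theorem coeffNormSq_eq_sum {p : MvPolynomial σ ℂ} {s : Finset (σ →₀ ℕ)} (hs : p.support ⊆ s) :
    coeffNormSq p = ∑ α ∈ s, ‖coeff α p‖ ^ 2 :=
  Finset.sum_subset hs fun α _ hα => by simp [notMem_support_iff.1 hα]

theorem card_antidiagonal_le [DecidableEq σ] (γ : σ →₀ ℕ) :
    (HasAntidiagonal.antidiagonal γ).card ≤ 2 ^ γ.degree := by
  have hfst : (HasAntidiagonal.antidiagonal γ).card ≤ (Finset.Iic γ).card := by
    refine Finset.card_le_card_of_injOn Prod.fst (fun x hx => ?_) fun x hx y hy hxy => ?_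
    · simpa using HasAntidiagonal.antidiagonal.fst_le hx
    · have hx' : x.1 + x.2 = γ := HasAntidiagonal.mem_antidiagonal.1 hx
      have hy' : y.1 + y.2 = γ := HasAntidiagonal.mem_antidiagonal.1 hy
      exact Prod.ext hxy <| add_left_cancel (a := x.1) <| by rw [hx', hxy, hy']
  calc (HasAntidiagonal.antidiagonal γ).card ≤ ∏ i ∈ γ.support, (γ i + 1) := by
        simpa [Finsupp.card_Iic] using hfst
    _ ≤ ∏ i ∈ γ.support, 2 ^ γ i := Finset.prod_le_prod' fun i _ => Nat.lt_two_pow_self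
    _ = 2 ^ γ.degree := Finset.prod_pow_eq_pow_sum _ _ _

theorem norm_sq_coeff_mul_le [DecidableEq σ] (p q : MvPolynomial σ ℂ) (γ : σ →₀ ℕ) :
    ‖coeff γ (p * q)‖ ^ 2 ≤ 2 ^ γ.degree *
      ∑ x ∈ p.support ×ˢ q.support with x.1 + x.2 = γ, ‖coeff x.1 p‖ ^ 2 * ‖coeff x.2 q‖ ^ 2 := by
  have hsub : (p.support ×ˢ q.support).filter (fun x => x.1 + x.2 = γ) ⊆
      HasAntidiagonal.antidiagonal γ := fun x hx =>
    HasAntidiagonal.mem_antidiagonal.2 (Finset.mem_filter.1 hx).2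
  calc ‖coeff γ (p * q)‖ ^ 2
      ≤ (∑ x ∈ HasAntidiagonal.antidiagonal γ, ‖coeff x.1 p * coeff x.2 q‖) ^ 2 := by
        rw [coeff_mul]
        gcongr
        exact norm_sum_le _ _
    _ ≤ (HasAntidiagonal.antidiagonal γ).card *
          ∑ x ∈ HasAntidiagonal.antidiagonal γ, ‖coeff x.1 p * coeff x.2 q‖ ^ 2 :=
        sq_sum_le_card_mul_sum_sq
    _ ≤ 2 ^ γ.degree * ∑ x ∈ HasAntidiagonal.antidiagonal γ, ‖coeff x.1 p * coeff x.2 q‖ ^ 2 := by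
        gcongr
        exact_mod_cast card_antidiagonal_le γ
    _ = _ := by
        simp only [norm_mul, mul_pow]
        congr 1
        refine (Finset.sum_subset hsub fun x hx hx' => ?_).symm
        have : coeff x.1 p = 0 ∨ coeff x.2 q = 0 := by
          by_contra! h
          exact hx' (by simpa [h] using hx)
        rcases this with h | h <;> simp [h]

theorem coeffNormSq_mul_le (p q : MvPolynomial σ ℂ) :
    coeffNormSq (p * q) ≤ 2 ^ (p * q).totalDegree * (coeffNormSq p * coeffNormSq q) := by
  classical
  calc coeffNormSq (p * q)
      ≤ ∑ γ ∈ (p * q).support, 2 ^ (p * q).totalDegree *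
          ∑ x ∈ p.support ×ˢ q.support with x.1 + x.2 = γ,
            ‖coeff x.1 p‖ ^ 2 * ‖coeff x.2 q‖ ^ 2 := by
        refine Finset.sum_le_sum fun γ hγ => (norm_sq_coeff_mul_le p q γ).trans ?_
        gcongr
        · norm_num
        · exact le_totalDegree hγ
    _ ≤ 2 ^ (p * q).totalDegree *
          ∑ x ∈ p.support ×ˢ q.support, ‖coeff x.1 p‖ ^ 2 * ‖coeff x.2 q‖ ^ 2 := by
        rw [← Finset.mul_sum]
        gcongr
        exact Finset.sum_fiberwise_le_sum_of_sum_fiber_nonneg fun γ _ =>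
          Finset.sum_nonneg fun x _ => by positivity
    _ = 2 ^ (p * q).totalDegree * (coeffNormSq p * coeffNormSq q) := by
        rw [Finset.sum_product, coeffNormSq, coeffNormSq, Finset.sum_mul_sum]

end CoeffNorm

section Torus

variable {σ : Type*} {N : ℕ} [NeZero N]

/-- The point of the discrete torus `{ζ : ζ ^ N = 1}^σ` with angles `w`. Averaging over this finite
group replaces integration over the torus for polynomials whose exponents are less than `N`. -/
noncomputable def torusPoint (w : σ → ZMod N) : σ → ℂ := fun i => ZMod.stdAddChar (w i)

theorem norm_torusPoint (w : σ → ZMod N) (i : σ) : ‖torusPoint w i‖ = 1 :=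
  AddChar.norm_apply _ _

variable [Fintype σ]

theorem expect_stdAddChar_dotProduct [DecidableEq σ] {γ : σ → ZMod N} (hγ : γ ≠ 0) :
    𝔼 w : σ → ZMod N, ZMod.stdAddChar (w ⬝ᵥ γ) = (0 : ℂ) := by
  let ψ : AddChar (σ → ZMod N) ℂ := (ZMod.stdAddChar (N := N)).compAddMonoidHom
    (Fintype.linearCombination (ZMod N) γ).toAddMonoidHom
  obtain ⟨i, hi⟩ := Function.ne_iff.1 hγ
  have hψ : ψ ≠ 0 := fun h => hi <| ZMod.injective_stdAddChar <| by
    simpa [ψ, Fintype.linearCombination_apply_single] using DFunLike.congr_fun h (Pi.single i 1)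
  exact AddChar.expect_eq_zero_iff_ne_zero.2 hψ

theorem prod_torusPoint_pow_mul_conj (α β : σ →₀ ℕ) (w : σ → ZMod N) :
    (∏ i, torusPoint w i ^ α i) * conj (∏ i, torusPoint w i ^ β i) =
      ZMod.stdAddChar (w ⬝ᵥ fun i => (α i - β i : ZMod N)) := by
  have hsum : w ⬝ᵥ (fun i => (α i - β i : ZMod N)) = ∑ i, (α i • w i + β i • -w i) :=
    Finset.sum_congr rfl fun i _ => by simp only [nsmul_eq_mul]; ring
  have hprod : ∀ f : σ → ZMod N, (ZMod.stdAddChar (∑ i, f i) : ℂ) = ∏ i, ZMod.stdAddChar (f i) :=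
    fun f => map_prod (ZMod.stdAddChar (N := N)).toMonoidHom (fun i => Multiplicative.ofAdd (f i)) _
  rw [hsum, hprod, map_prod, ← Finset.prod_mul_distrib]
  simp only [AddChar.map_add_eq_mul, AddChar.map_nsmul_eq_pow, AddChar.map_neg_eq_conj, map_pow,
    torusPoint]

theorem expect_prod_torusPoint_pow_mul_conj [DecidableEq σ] {α β : σ →₀ ℕ} (hα : ∀ i, α i < N)
    (hβ : ∀ i, β i < N) :
    𝔼 w : σ → ZMod N, (∏ i, torusPoint w i ^ α i) * conj (∏ i, torusPoint w i ^ β i) =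
      if α = β then 1 else 0 := by
  simp only [prod_torusPoint_pow_mul_conj]
  split_ifs with h
  · have h0 : (fun i => (α i - β i : ZMod N)) = 0 := funext fun i => by rw [h, sub_self]; rfl
    simp [h0]
  · refine expect_stdAddChar_dotProduct fun h0 => h (Finsupp.ext fun i => ?_)
    have hcast : (α i : ZMod N) = β i := sub_eq_zero.1 (congrFun h0 i)
    rw [← ZMod.val_cast_of_lt (hα i), hcast, ZMod.val_cast_of_lt (hβ i)]

theorem expect_norm_sq_eval_torusPoint [DecidableEq σ] {p : MvPolynomial σ ℂ}
    (hp : ∀ i, p.degreeOf i < N) :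
    𝔼 w : σ → ZMod N, ‖eval (torusPoint w) p‖ ^ 2 = coeffNormSq p := by
  have hlt : ∀ α ∈ p.support, ∀ i, α i < N := fun α hα i =>
    (monomial_le_degreeOf i hα).trans_lt (hp i)
  have hexpand : ∀ w : σ → ZMod N, ((‖eval (torusPoint w) p‖ ^ 2 : ℝ) : ℂ) =
      ∑ α ∈ p.support, ∑ β ∈ p.support, coeff α p * conj (coeff β p) *
        ((∏ i, torusPoint w i ^ α i) * conj (∏ i, torusPoint w i ^ β i)) := fun w => by
    rw [Complex.ofReal_pow, ← Complex.mul_conj', eval_eq', map_sum, Finset.sum_mul_sum]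
    refine Finset.sum_congr rfl fun α _ => Finset.sum_congr rfl fun β _ => ?_
    rw [map_mul]
    ring
  apply Complex.ofReal_injective
  calc ((𝔼 w : σ → ZMod N, ‖eval (torusPoint w) p‖ ^ 2 : ℝ) : ℂ)
      = 𝔼 w : σ → ZMod N, ((‖eval (torusPoint w) p‖ ^ 2 : ℝ) : ℂ) := by simp
    _ = ∑ α ∈ p.support, ∑ β ∈ p.support, coeff α p * conj (coeff β p) *
        𝔼 w : σ → ZMod N, (∏ i, torusPoint w i ^ α i) * conj (∏ i, torusPoint w i ^ β i) := by
        simp only [hexpand, Finset.expect_sum_comm, Finset.mul_expect]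
    _ = ∑ α ∈ p.support, ∑ β ∈ p.support,
          if α = β then coeff α p * conj (coeff β p) else 0 := by
        refine Finset.sum_congr rfl fun α hα => Finset.sum_congr rfl fun β hβ => ?_
        rw [expect_prod_torusPoint_pow_mul_conj (hlt α hα) (hlt β hβ), mul_ite, mul_one, mul_zero]
    _ = (coeffNormSq p : ℂ) := by
        simp +contextual [coeffNormSq, Complex.mul_conj']

theorem expect_norm_pow_four_eval_torusPoint_le [DecidableEq σ] {p : MvPolynomial σ ℂ} {d : ℕ}
    (hd : p.totalDegree ≤ d) (hN : 2 * d < N) :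
    𝔼 w : σ → ZMod N, (‖eval (torusPoint w) p‖ ^ 2) ^ 2 ≤
      4 ^ d * (𝔼 w : σ → ZMod N, ‖eval (torusPoint w) p‖ ^ 2) ^ 2 := by
  have hdeg : (p * p).totalDegree ≤ 2 * d := (totalDegree_mul p p).trans (by omega)
  calc 𝔼 w : σ → ZMod N, (‖eval (torusPoint w) p‖ ^ 2) ^ 2
      = 𝔼 w : σ → ZMod N, ‖eval (torusPoint w) (p * p)‖ ^ 2 := by
        simp only [map_mul, norm_mul, sq]
    _ = coeffNormSq (p * p) := expect_norm_sq_eval_torusPoint fun i =>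
        ((degreeOf_le_totalDegree _ i).trans hdeg).trans_lt hN
    _ ≤ 2 ^ (2 * d) * (coeffNormSq p * coeffNormSq p) := by
        refine (coeffNormSq_mul_le p p).trans ?_
        gcongr
        · exact mul_nonneg (coeffNormSq_nonneg p) (coeffNormSq_nonneg p)
        · norm_num
    _ = _ := by
        rw [expect_norm_sq_eval_torusPoint fun i =>
          ((degreeOf_le_totalDegree p i).trans hd).trans_lt (by omega), pow_mul, sq (coeffNormSq p)]
        norm_num

theorem coeffNormSq_rpow_le [DecidableEq σ] {p : MvPolynomial σ ℂ} {d : ℕ}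
    (hd : p.totalDegree ≤ d) (hN : 2 * d < N) {s : ℝ} (hs0 : 0 < s) (hs1 : s < 1) :
    coeffNormSq p ^ s ≤
      (4 ^ d : ℝ) ^ (1 - s) * 𝔼 w : σ → ZMod N, (‖eval (torusPoint w) p‖ ^ 2) ^ s := by
  rw [← expect_norm_sq_eval_torusPoint (N := N) fun i =>
    ((degreeOf_le_totalDegree p i).trans hd).trans_lt (by omega)]
  exact expect_rpow_le_of_expect_sq_le _ (fun _ _ => by positivity) (by positivity) hs0 hs1
    (expect_norm_pow_four_eval_torusPoint_le hd hN)

end Torus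

section CauchyEstimate

theorem norm_coeff_mul_pow_le {p : Polynomial ℂ} {r M : ℝ} (hr : 0 ≤ r)
    (hM : ∀ s : ℂ, ‖s‖ = r → ‖p.eval s‖ ≤ M) (j : ℕ) : ‖p.coeff j‖ * r ^ j ≤ M := by
  set q : Polynomial ℂ := p.comp (.C (r : ℂ) * .X) with hq
  have hM0 : 0 ≤ M := (norm_nonneg _).trans (hM r (by simp [abs_of_nonneg hr]))
  have hcoeff : ‖q.coeff j‖ = ‖p.coeff j‖ * r ^ j := by
    simp [hq, Polynomial.comp_C_mul_X_coeff, abs_of_nonneg hr]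
  have hsingle : ‖q.coeff j‖ ^ 2 ≤ ∑ i ∈ q.support, ‖q.coeff i‖ ^ 2 := by
    by_cases hj : j ∈ q.support
    · exact Finset.single_le_sum (f := fun i => ‖q.coeff i‖ ^ 2) (fun _ _ => by positivity) hj
    · rw [Polynomial.notMem_support_iff.1 hj]
      simpa using Finset.sum_nonneg fun i _ => sq_nonneg ‖q.coeff i‖
  rw [Polynomial.sum_sq_norm_coeff_eq_circleAverage] at hsingle
  rw [← hcoeff]
  refine (sq_le_sq₀ (norm_nonneg _) hM0).1 (hsingle.trans ?_)
  refine Real.circleAverage_mono_on_of_le_circle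
    (ContinuousOn.circleIntegrable zero_le_one (by fun_prop)) fun s hs => ?_
  gcongr
  simpa [hq] using hM (r * s) (by simp_all [abs_of_nonneg hr])

theorem norm_apply_pow_mul_pow_le {A : Type*} [CommRing A] [Algebra ℂ A] (Λ : A →ₗ[ℂ] ℂ)
    (a b : A) (k d : ℕ) {r M : ℝ} (hr : 0 ≤ r)
    (hM : ∀ s : ℂ, ‖s‖ = r → ‖Λ ((s • a + b) ^ (k + d))‖ ≤ M) :
    ‖Λ (a ^ k * b ^ d)‖ * r ^ k ≤ M := by
  set p : Polynomial ℂ := ∑ j ∈ Finset.range (k + d + 1),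
    .C (Λ (a ^ j * b ^ (k + d - j) * (k + d).choose j)) * .X ^ j with hp
  have heval : ∀ s, p.eval s = Λ ((s • a + b) ^ (k + d)) := fun s => by
    rw [hp, Polynomial.eval_finsetSum, add_pow, map_sum]
    refine Finset.sum_congr rfl fun j _ => ?_
    rw [smul_pow, smul_mul_assoc, smul_mul_assoc, map_smul, Polynomial.eval_C_mul,
      Polynomial.eval_pow, Polynomial.eval_X, smul_eq_mul, mul_comm]
  have hcoeff : p.coeff k = Λ (a ^ k * b ^ d) * (k + d).choose k := by
    simp only [hp, Polynomial.finsetSum_coeff, Polynomial.coeff_C_mul_X_pow]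
    rw [Finset.sum_ite_eq, if_pos (Finset.mem_range.2 (by omega)), Nat.add_sub_cancel_left,
      ← nsmul_eq_mul', map_nsmul, nsmul_eq_mul']
  have hchoose : (1 : ℝ) ≤ (k + d).choose k := by
    exact_mod_cast Nat.choose_pos (Nat.le_add_right k d)
  calc ‖Λ (a ^ k * b ^ d)‖ * r ^ k ≤ ‖p.coeff k‖ * r ^ k := by
        rw [hcoeff, norm_mul, Complex.norm_natCast]
        gcongr
        exact le_mul_of_one_le_right (norm_nonneg _) hchoose
    _ ≤ M := norm_coeff_mul_pow_le hr (by simpa only [heval] using hM) k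

end CauchyEstimate

section Functionals

variable {σ : Type*} [Fintype σ]

/-- The linear form `∑ i, z i • X i`, linearly in its coefficient vector `z`. -/
noncomputable def linForm : (σ → ℂ) →ₗ[ℂ] MvPolynomial σ ℂ := Fintype.linearCombination ℂ X

theorem linForm_apply (z : σ → ℂ) : linForm z = ∑ i, z i • X i := rfl

/-- A linear functional `Λ` on polynomials is regarded as the symmetric `m`-linear form
`(z₁, …, zₘ) ↦ Λ (linForm z₁ * ⋯ * linForm zₘ)`, for every `m` at once. This says that the
associated `m`-homogeneous polynomial `z ↦ Λ (linForm z ^ m)` is bounded by `M` on the unit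
polydisc. -/
def PolydiscBound (Λ : MvPolynomial σ ℂ →ₗ[ℂ] ℂ) (m : ℕ) (M : ℝ) : Prop :=
  ∀ z : σ → ℂ, ‖z‖ ≤ 1 → ‖Λ (linForm z ^ m)‖ ≤ M

variable {Λ : MvPolynomial σ ℂ →ₗ[ℂ] ℂ} {m : ℕ} {M : ℝ}

theorem PolydiscBound.nonneg (h : PolydiscBound Λ m M) : 0 ≤ M :=
  (norm_nonneg _).trans (h 0 (by simp))

theorem PolydiscBound.norm_apply_linForm_pow_le (h : PolydiscBound Λ m M) {z : σ → ℂ} {R : ℝ}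
    (hR : 0 < R) (hz : ‖z‖ ≤ R) : ‖Λ (linForm z ^ m)‖ ≤ R ^ m * M := by
  have hscale : z = (R : ℂ) • ((R : ℂ)⁻¹ • z) := (smul_inv_smul₀ (by exact_mod_cast hR.ne') z).symm
  rw [hscale, map_smul, smul_pow, map_smul, norm_smul, norm_pow, Complex.norm_real,
    Real.norm_of_nonneg hR.le]
  gcongr
  refine h _ ?_
  rw [norm_smul, norm_inv, Complex.norm_real, Real.norm_of_nonneg hR.le]
  exact inv_mul_le_one_of_le₀ hz hR.le

theorem PolydiscBound.comp_mulRight_linForm_pow {k d : ℕ} (hk : 0 < k)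
    (h : PolydiscBound Λ (k + d) M) {z : σ → ℂ} (hz : ‖z‖ ≤ 1) :
    PolydiscBound (Λ ∘ₗ LinearMap.mulRight ℂ (linForm z ^ d)) k
      ((k + d : ℝ) ^ k * (Real.exp 1 * M)) := by
  intro y hy
  -- Cauchy's estimate on the circle of radius `1 / m`, `m = k + d`, where `(1 + 1 / m) ^ m ≤ e`.
  have hm : (0 : ℝ) < k + d := by positivity
  have hexp : (1 + (k + d : ℝ)⁻¹) ^ (k + d) ≤ Real.exp 1 := by
    calc (1 + (k + d : ℝ)⁻¹) ^ (k + d) ≤ Real.exp (k + d : ℝ)⁻¹ ^ (k + d) := by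
          gcongr
          rw [add_comm]
          exact Real.add_one_le_exp _
      _ = Real.exp 1 := by
          rw [← Real.exp_nat_mul, Nat.cast_add, mul_inv_cancel₀ hm.ne']
  have hcauchy : ‖Λ (linForm y ^ k * linForm z ^ d)‖ * (k + d : ℝ)⁻¹ ^ k ≤ Real.exp 1 * M := by
    refine norm_apply_pow_mul_pow_le Λ _ _ k d (by positivity) fun s hs => ?_
    rw [← map_smul, ← map_add]
    refine (h.norm_apply_linForm_pow_le (R := 1 + (k + d : ℝ)⁻¹) (by positivity) ?_).trans ?_
    · calc ‖s • y + z‖ ≤ ‖s‖ * ‖y‖ + ‖z‖ := (norm_add_le _ _).trans_eq (by rw [norm_smul])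
        _ ≤ (k + d : ℝ)⁻¹ * 1 + 1 := by rw [hs]; gcongr
        _ = 1 + (k + d : ℝ)⁻¹ := by ring
    · exact mul_le_mul_of_nonneg_right hexp h.nonneg
  rwa [inv_pow, mul_inv_le_iff₀ (by positivity), mul_comm (Real.exp 1 * M)] at hcauchy

theorem polydiscBound_of_cube
    (h : ∀ x : σ → ℝ, (∀ i, |x i| ≤ 1) → ‖Λ (linForm (fun i => (x i : ℂ)) ^ m)‖ ≤ M) :
    PolydiscBound Λ m (2 ^ m * M) := by
  intro z hz
  -- For `s = w ^ 2` on the unit circle, `s • z + star z` is `2 * w` times the real vector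
  -- `Re (w z)`, and `Λ (linForm z ^ m)` is the coefficient of `s ^ m` in
  -- `Λ (linForm (s • z + star z) ^ m)`.
  have hrotate : ∀ s : ℂ, ‖s‖ = 1 →
      ‖Λ ((s • linForm z + linForm (star z)) ^ (m + 0))‖ ≤ 2 ^ m * M := by
    intro s hs
    obtain ⟨w, rfl⟩ : ∃ w : ℂ, w ^ 2 = s := IsAlgClosed.exists_pow_nat_eq s two_pos
    have hw : ‖w‖ = 1 := by simpa [norm_pow, pow_eq_one_iff_of_nonneg] using hs
    have hre : w ^ 2 • z + star z = (2 * w) • fun i => (((w * z i).re : ℝ) : ℂ) := by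
      funext i
      have hww : w * star w = 1 := by
        rw [Complex.star_def, Complex.mul_conj', hw]
        simp
      simp only [Pi.add_apply, Pi.smul_apply, Pi.star_apply, smul_eq_mul, Complex.re_eq_add_conj,
        map_mul, ← Complex.star_def]
      linear_combination -star (z i) * hww
    rw [← map_smul, ← map_add, hre, map_smul, add_zero, smul_pow, map_smul, norm_smul, norm_pow,
      norm_mul, hw, mul_one, RCLike.norm_ofNat]
    gcongr
    refine h _ fun i => (Complex.abs_re_le_norm _).trans ?_
    rw [norm_mul, hw, one_mul]
    exact (norm_le_pi_norm z i).trans hz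
  simpa using norm_apply_pow_mul_pow_le Λ _ _ m 0 zero_le_one hrotate

theorem PolydiscBound.sum_norm_apply_X_le (h : PolydiscBound Λ 1 M) :
    ∑ i, ‖Λ (X i)‖ ≤ M := by
  set u : σ → ℂ := fun i => star (Λ (X i)) / ‖Λ (X i)‖ with hu
  have hu1 : ‖u‖ ≤ 1 := (pi_norm_le_iff_of_nonneg zero_le_one).2 fun i => by
    simpa [hu] using div_self_le_one ‖Λ (X i)‖
  have hmul : ∀ i, u i * Λ (X i) = (‖Λ (X i)‖ : ℂ) := fun i => by
    rw [hu, div_mul_eq_mul_div, Complex.star_def, Complex.conj_mul', sq, mul_self_div_self]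
  calc ∑ i, ‖Λ (X i)‖ = ‖((∑ i, ‖Λ (X i)‖ : ℝ) : ℂ)‖ := by
        rw [Complex.norm_real, Real.norm_of_nonneg (by positivity)]
    _ = ‖Λ (linForm u ^ 1)‖ := by simp [linForm_apply, hmul]
    _ ≤ M := h u hu1

end Functionals

section Symbol

variable {σ : Type*}

/-- The functional encoding the polarization of `P`: on homogeneous polynomials it inverts
`symbol`. -/
noncomputable def polarFunctional (P : MvPolynomial σ ℂ) : MvPolynomial σ ℂ →ₗ[ℂ] ℂ :=
  (basisMonomials σ ℂ).constr ℂ fun α => coeff α P / α.multinomial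

theorem polarFunctional_monomial (P : MvPolynomial σ ℂ) (α : σ →₀ ℕ) :
    polarFunctional P (monomial α 1) = coeff α P / α.multinomial := by
  simpa [polarFunctional] using
    (basisMonomials σ ℂ).constr_basis ℂ (fun α => coeff α P / (α.multinomial : ℂ)) α

variable [Fintype σ]

/-- The `d`-homogeneous polynomial `z ↦ Λ (linForm z ^ d)` associated with a functional `Λ`. -/
noncomputable def symbol (Λ : MvPolynomial σ ℂ →ₗ[ℂ] ℂ) (d : ℕ) : MvPolynomial σ ℂ :=
  ∑ t : Fin d → σ, monomial (exponent t) (Λ (monomial (exponent t) 1))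

theorem eval_symbol (Λ : MvPolynomial σ ℂ →ₗ[ℂ] ℂ) (d : ℕ) (z : σ → ℂ) :
    eval z (symbol Λ d) = Λ (linForm z ^ d) := by
  rw [linForm_apply, sum_smul_X_pow, symbol, map_sum, map_sum]
  refine Fintype.sum_congr _ _ fun t => ?_
  rw [eval_monomial_exponent, mul_comm, ← smul_eq_mul, ← map_smul, smul_monomial, smul_eq_mul,
    mul_one]

theorem totalDegree_symbol_le (Λ : MvPolynomial σ ℂ →ₗ[ℂ] ℂ) (d : ℕ) :
    (symbol Λ d).totalDegree ≤ d :=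
  totalDegree_finsetSum_le fun t _ =>
    (totalDegree_monomial_le _ _).trans_eq (degree_exponent t)

theorem symbol_eq_sum_finsuppAntidiag [DecidableEq σ] (Λ : MvPolynomial σ ℂ →ₗ[ℂ] ℂ) (d : ℕ) :
    symbol Λ d = ∑ α ∈ Finset.univ.finsuppAntidiag d,
      monomial α (α.multinomial * Λ (monomial α 1)) := by
  rw [symbol, sum_exponent fun α => monomial α (Λ (monomial α 1))]
  simp only [← nsmul_eq_mul, map_nsmul]

theorem coeff_symbol [DecidableEq σ] (Λ : MvPolynomial σ ℂ →ₗ[ℂ] ℂ) {d : ℕ} {α : σ →₀ ℕ}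
    (hα : α ∈ Finset.univ.finsuppAntidiag d) :
    coeff α (symbol Λ d) = α.multinomial * Λ (monomial α 1) := by
  simp [symbol_eq_sum_finsuppAntidiag, coeff_sum, coeff_monomial, hα]

theorem support_symbol_subset [DecidableEq σ] (Λ : MvPolynomial σ ℂ →ₗ[ℂ] ℂ) (d : ℕ) :
    (symbol Λ d).support ⊆ Finset.univ.finsuppAntidiag d := by
  intro α hα
  by_contra hα'
  simp_all [symbol_eq_sum_finsuppAntidiag, coeff_sum, coeff_monomial]

theorem sum_multinomial_mul_norm_sq (Λ : MvPolynomial σ ℂ →ₗ[ℂ] ℂ) (d : ℕ) :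
    ∑ t : Fin d → σ, (exponent t).multinomial * ‖Λ (monomial (exponent t) 1)‖ ^ 2 =
      coeffNormSq (symbol Λ d) := by
  classical
  rw [coeffNormSq_eq_sum (support_symbol_subset Λ d),
    sum_exponent fun α => (α.multinomial : ℝ) * ‖Λ (monomial α 1)‖ ^ 2]
  refine Finset.sum_congr rfl fun α hα => ?_
  rw [coeff_symbol Λ hα, nsmul_eq_mul, norm_mul, Complex.norm_natCast]
  ring

theorem sum_norm_sq_coeff_symbol_rpow_le (Λ : MvPolynomial σ ℂ →ₗ[ℂ] ℂ) (d : ℕ) {s : ℝ}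
    (hs : s ≤ 1) :
    ∑ α ∈ (symbol Λ d).support, (‖coeff α (symbol Λ d)‖ ^ 2) ^ s ≤
      ∑ t : Fin d → σ, ((exponent t).multinomial * ‖Λ (monomial (exponent t) 1)‖ ^ 2) ^ s := by
  classical
  rw [sum_exponent fun α => ((α.multinomial : ℝ) * ‖Λ (monomial α 1)‖ ^ 2) ^ s]
  refine (Finset.sum_le_sum_of_subset_of_nonneg (support_symbol_subset Λ d) fun _ _ _ => by
    positivity).trans (Finset.sum_le_sum fun α hα => ?_)
  have hone : (1 : ℝ) ≤ α.multinomial := by exact_mod_cast Nat.multinomial_pos _ _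
  calc (‖coeff α (symbol Λ d)‖ ^ 2) ^ s
      = (α.multinomial : ℝ) ^ s * (α.multinomial * ‖Λ (monomial α 1)‖ ^ 2) ^ s := by
        rw [coeff_symbol Λ hα, norm_mul, Complex.norm_natCast,
          ← Real.mul_rpow (by positivity) (by positivity)]
        ring_nf
    _ ≤ α.multinomial • (α.multinomial * ‖Λ (monomial α 1)‖ ^ 2) ^ s := by
        rw [nsmul_eq_mul]
        gcongr
        exact Real.rpow_le_self_of_one_le hone hs

theorem symbol_polarFunctional {P : MvPolynomial σ ℂ} {m : ℕ} (hP : P.IsHomogeneous m) :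
    symbol (polarFunctional P) m = P := by
  classical
  ext α
  by_cases hα : α ∈ Finset.univ.finsuppAntidiag m
  · have : (α.multinomial : ℂ) ≠ 0 := by exact_mod_cast (Nat.multinomial_pos _ _).ne'
    rw [coeff_symbol _ hα, polarFunctional_monomial, mul_div_cancel₀ _ this]
  · rw [notMem_support_iff.1 fun h => hα (support_symbol_subset _ _ h)]
    refine (hP.coeff_eq_zero fun h => hα ?_).symm
    simpa [Finsupp.degree_eq_sum] using h

end Symbol

section Bootstrap

variable {σ : Type*} [Fintype σ]

/-- The mixed-norm sum of a weight `h` on exponents of degree `k + d`, in which `k` of the variables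
are singled out and the other `d` are summed inside. -/
noncomputable def blockSum (k d : ℕ) (h : (σ →₀ ℕ) → ℝ) : ℝ :=
  ∑ u : Fin k → σ, (∑ v : Fin d → σ, h (exponent u + exponent v)) ^ ((k : ℝ) / (k + 1))

theorem blockSum_zero_right (k : ℕ) (h : (σ →₀ ℕ) → ℝ) :
    blockSum k 0 h = ∑ u : Fin k → σ, h (exponent u) ^ ((k : ℝ) / (k + 1)) := by
  simp [blockSum, exponent]

theorem blockSum_add_le {k l d : ℕ} (hk : 0 < k) (hl : 0 < l) {h : (σ →₀ ℕ) → ℝ}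
    (hh : ∀ α, 0 ≤ h α) {R : ℝ} (hR : 0 ≤ R)
    (hrow : blockSum k (l + d) h ≤ R ^ ((k : ℝ) / (k + 1)))
    (hcol : blockSum l (k + d) h ≤ R ^ ((l : ℝ) / (l + 1))) :
    blockSum (k + l) d h ≤ R ^ (((k + l : ℕ) : ℝ) / ((k + l : ℕ) + 1)) := by
  let H : (Fin k → σ) → (Fin l → σ) → ℝ := fun u u' =>
    ∑ v : Fin d → σ, h (exponent u + exponent u' + exponent v)
  have hHrow : ∀ u, ∑ u', H u u' = ∑ v : Fin (l + d) → σ, h (exponent u + exponent v) := fun u => by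
    rw [sum_exponent_add fun α => h (exponent u + α)]
    simp only [H, add_assoc]
  have hHcol : ∀ u', ∑ u, H u u' = ∑ v : Fin (k + d) → σ, h (exponent u' + exponent v) :=
    fun u' => by
      rw [sum_exponent_add fun α => h (exponent u' + α)]
      simp only [H, add_assoc, add_left_comm]
  have hmerge := sum_sum_rpow_le (H := H) (fun _ _ => Finset.sum_nonneg fun _ _ => hh _)
    (Nat.cast_pos.2 hk) (Nat.cast_pos.2 hl) hR
    (by simpa only [hHrow, blockSum] using hrow) (by simpa only [hHcol, blockSum] using hcol)
  rw [← Nat.cast_add] at hmerge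
  rwa [blockSum, sum_exponent_add fun α =>
    (∑ v : Fin d → σ, h (α + exponent v)) ^ (((k + l : ℕ) : ℝ) / ((k + l : ℕ) + 1))]

theorem blockSum_le_of_forall_lt_two_mul {k₀ : ℕ} (hk₀ : 0 < k₀) {m : ℕ} {h : (σ →₀ ℕ) → ℝ}
    (hh : ∀ α, 0 ≤ h α) {R : ℝ} (hR : 0 ≤ R)
    (hbase : ∀ k d, k₀ ≤ k → k < 2 * k₀ → k + d = m → blockSum k d h ≤ R ^ ((k : ℝ) / (k + 1)))
    {k d : ℕ} (hk : k₀ ≤ k) (hkd : k + d = m) : blockSum k d h ≤ R ^ ((k : ℝ) / (k + 1)) := by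
  induction k using Nat.strong_induction_on generalizing d with
  | _ k ih =>
    rcases lt_or_ge k (2 * k₀) with hlt | hge
    · exact hbase k d hk hlt hkd
    · obtain ⟨l, rfl⟩ := Nat.exists_eq_add_of_le hk
      exact blockSum_add_le hk₀ (by omega) hh hR (ih k₀ (by omega) le_rfl (by omega))
        (ih l (by omega) (by omega) (by omega))

variable (σ) in
/-- `A` is a Bohnenblust–Hille constant for symmetric `k`-linear forms in the variables `σ`, with
the coefficients of the form listed over all `k`-tuples of variables. -/
def TupleBound (k : ℕ) (A : ℝ) : Prop :=
  ∀ (Λ : MvPolynomial σ ℂ →ₗ[ℂ] ℂ) (M : ℝ), PolydiscBound Λ k M →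
    ∑ u : Fin k → σ, (‖Λ (monomial (exponent u) 1)‖ ^ 2) ^ ((k : ℝ) / (k + 1)) ≤
      ((A * M) ^ 2) ^ ((k : ℝ) / (k + 1))

theorem TupleBound.mono {k : ℕ} {A B : ℝ} (h : TupleBound σ k A) (hA : 0 ≤ A) (hAB : A ≤ B) :
    TupleBound σ k B := fun Λ M hΛ => (h Λ M hΛ).trans <| by
  have := hΛ.nonneg
  gcongr

theorem tupleBound_one : TupleBound σ 1 1 := by
  intro Λ M hΛ
  have hsqrt : ∀ x : ℝ, 0 ≤ x → (x ^ 2) ^ (((1 : ℕ) : ℝ) / ((1 : ℕ) + 1)) = x := fun x hx => by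
    rw [← Real.rpow_natCast_mul hx]
    norm_num
  simp only [hsqrt _ (norm_nonneg _), one_mul, hsqrt _ hΛ.nonneg]
  rw [← (Equiv.funUnique (Fin 1) σ).symm.sum_comp]
  simpa [exponent, X] using hΛ.sum_norm_apply_X_le

theorem sum_multinomial_add_mul_norm_sq_rpow_le [DecidableEq σ] (Λ : MvPolynomial σ ℂ →ₗ[ℂ] ℂ)
    {k d N : ℕ} [NeZero N] (hN : 2 * d < N) {s : ℝ} (hs0 : 0 < s) (hs1 : s < 1) (u : Fin k → σ) :
    (∑ v : Fin d → σ, ((exponent u + exponent v).multinomial : ℝ) *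
        ‖Λ (monomial (exponent u + exponent v) 1)‖ ^ 2) ^ s ≤
      ((k + d : ℝ) ^ k) ^ s * ((4 ^ d : ℝ) ^ (1 - s) * 𝔼 w : σ → ZMod N,
        (‖Λ (monomial (exponent u) 1 * linForm (torusPoint w) ^ d)‖ ^ 2) ^ s) := by
  set Λu := Λ ∘ₗ LinearMap.mulLeft ℂ (monomial (exponent u) 1) with hΛu
  have hrow : ∑ v : Fin d → σ, ((exponent u + exponent v).multinomial : ℝ) *
      ‖Λ (monomial (exponent u + exponent v) 1)‖ ^ 2 ≤
        (k + d : ℝ) ^ k * coeffNormSq (symbol Λu d) := by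
    rw [← sum_multinomial_mul_norm_sq, Finset.mul_sum]
    refine Finset.sum_le_sum fun v _ => ?_
    rw [hΛu, LinearMap.comp_apply, LinearMap.mulLeft_apply, monomial_mul, one_mul, ← mul_assoc]
    gcongr
    have := multinomial_add_le (exponent u) (exponent v)
    rw [degree_exponent, degree_exponent] at this
    exact_mod_cast this
  refine (Real.rpow_le_rpow (by positivity) hrow hs0.le).trans ?_
  rw [Real.mul_rpow (by positivity) (coeffNormSq_nonneg _)]
  have hnorm := coeffNormSq_rpow_le (totalDegree_symbol_le Λu d) hN hs0 hs1
  simp only [eval_symbol] at hnorm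
  gcongr
  exact hnorm

theorem TupleBound.expect_sum_le {k d : ℕ} (hk : 0 < k) {A : ℝ} (hA : TupleBound σ k A)
    {Λ : MvPolynomial σ ℂ →ₗ[ℂ] ℂ} {M : ℝ} (hΛ : PolydiscBound Λ (k + d) M) {N : ℕ} [NeZero N]
    [DecidableEq σ] :
    𝔼 w : σ → ZMod N, ∑ u : Fin k → σ,
        (‖Λ (monomial (exponent u) 1 * linForm (torusPoint w) ^ d)‖ ^ 2) ^ ((k : ℝ) / (k + 1)) ≤
      ((A * ((k + d : ℝ) ^ k * (Real.exp 1 * M))) ^ 2) ^ ((k : ℝ) / (k + 1)) := by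
  refine Finset.expect_le Finset.univ_nonempty fun w _ => ?_
  refine hA (Λ ∘ₗ LinearMap.mulRight ℂ (linForm (torusPoint w) ^ d)) _
    (hΛ.comp_mulRight_linForm_pow hk ?_)
  exact (pi_norm_le_iff_of_nonneg zero_le_one).2 fun i => (norm_torusPoint w i).le

theorem TupleBound.blockSum_le {k : ℕ} (hk : 0 < k) {A : ℝ} (hA : TupleBound σ k A)
    {Λ : MvPolynomial σ ℂ →ₗ[ℂ] ℂ} {d : ℕ} {M : ℝ} (hΛ : PolydiscBound Λ (k + d) M) :
    blockSum k d (fun α => α.multinomial * ‖Λ (monomial α 1)‖ ^ 2) ≤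
      ((k + d : ℝ) ^ k * (4 ^ d : ℝ) ^ (1 / (k : ℝ)) *
        (A * ((k + d : ℝ) ^ k * (Real.exp 1 * M))) ^ 2) ^ ((k : ℝ) / (k + 1)) := by
  classical
  have : (0 : ℝ) < k := Nat.cast_pos.2 hk
  set s : ℝ := k / (k + 1) with hs
  have hs0 : 0 < s := by positivity
  have hs1 : s < 1 := (div_lt_one (by positivity)).2 (lt_add_one _)
  have hexp : (4 ^ d : ℝ) ^ (1 - s) = ((4 ^ d : ℝ) ^ (1 / (k : ℝ))) ^ s := by
    rw [← Real.rpow_mul (by positivity), hs]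
    congr 1
    field_simp
    ring
  calc blockSum k d (fun α => α.multinomial * ‖Λ (monomial α 1)‖ ^ 2)
      ≤ ((k + d : ℝ) ^ k) ^ s * ((4 ^ d : ℝ) ^ (1 - s) * 𝔼 w : σ → ZMod (2 * d + 1),
          ∑ u : Fin k → σ,
            (‖Λ (monomial (exponent u) 1 * linForm (torusPoint w) ^ d)‖ ^ 2) ^ s) := by
        rw [Finset.expect_sum_comm, Finset.mul_sum, Finset.mul_sum]
        exact Finset.sum_le_sum fun u _ =>
          sum_multinomial_add_mul_norm_sq_rpow_le Λ (Nat.lt_succ_self _) hs0 hs1 u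
    _ ≤ ((k + d : ℝ) ^ k) ^ s * ((4 ^ d : ℝ) ^ (1 - s) *
          ((A * ((k + d : ℝ) ^ k * (Real.exp 1 * M))) ^ 2) ^ s) := by
        gcongr
        exact hA.expect_sum_le hk hΛ
    _ = _ := by
        rw [hexp, ← Real.mul_rpow (by positivity) (by positivity),
          ← Real.mul_rpow (by positivity) (by positivity), mul_assoc]

/-- The factor lost when a Bohnenblust–Hille constant in the degrees `[k₀, 2 * k₀)` is carried over
to degree `m`. -/
noncomputable def bootstrapFactor (k₀ m : ℕ) : ℝ :=
  m ^ (3 * k₀) * 2 ^ ((m : ℝ) / k₀) * Real.exp 1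

theorem bootstrapFactor_pos {k₀ m : ℕ} (hm : 0 < m) : 0 < bootstrapFactor k₀ m := by
  unfold bootstrapFactor
  positivity

theorem block_constant_le {k₀ k d : ℕ} (hk₀ : 0 < k₀) (hk : k₀ ≤ k) (hk2 : k < 2 * k₀) {A M : ℝ} :
    (k + d : ℝ) ^ k * (4 ^ d : ℝ) ^ (1 / (k : ℝ)) *
        (A * ((k + d : ℝ) ^ k * (Real.exp 1 * M))) ^ 2 ≤
      (bootstrapFactor k₀ (k + d) * A * M) ^ 2 := by
  have hm : (1 : ℝ) ≤ k + d := by exact_mod_cast (by omega : 1 ≤ k + d)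
  have hpow : (k + d : ℝ) ^ (3 * k) ≤ (k + d : ℝ) ^ (6 * k₀) :=
    pow_le_pow_right₀ hm (by omega)
  have hfour : (4 ^ d : ℝ) ^ (1 / (k : ℝ)) ≤ (2 ^ ((k + d : ℝ) / k₀)) ^ 2 := by
    rw [Real.rpow_pow_comm two_pos.le, ← Real.rpow_natCast 4 d, ← Real.rpow_mul (by norm_num),
      mul_one_div]
    norm_num
    gcongr
    linarith [(Nat.cast_nonneg k : (0 : ℝ) ≤ k)]
  calc _ = (k + d : ℝ) ^ (3 * k) * (4 ^ d : ℝ) ^ (1 / (k : ℝ)) * (Real.exp 1 * A * M) ^ 2 := by ring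
    _ ≤ (k + d : ℝ) ^ (6 * k₀) * (2 ^ ((k + d : ℝ) / k₀)) ^ 2 * (Real.exp 1 * A * M) ^ 2 := by
        gcongr
    _ = _ := by
        rw [bootstrapFactor, Nat.cast_add]
        ring

theorem sum_multinomial_mul_norm_sq_rpow_le {k₀ : ℕ} (hk₀ : 0 < k₀) {A : ℝ}
    (hA : ∀ k, k₀ ≤ k → k < 2 * k₀ → TupleBound σ k A) {m : ℕ} (hm : k₀ ≤ m)
    {Λ : MvPolynomial σ ℂ →ₗ[ℂ] ℂ} {M : ℝ} (hΛ : PolydiscBound Λ m M) :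
    ∑ t : Fin m → σ, ((exponent t).multinomial * ‖Λ (monomial (exponent t) 1)‖ ^ 2) ^
        ((m : ℝ) / (m + 1)) ≤
      ((bootstrapFactor k₀ m * A * M) ^ 2) ^ ((m : ℝ) / (m + 1)) := by
  rw [← blockSum_zero_right m fun α => (α.multinomial : ℝ) * ‖Λ (monomial α 1)‖ ^ 2]
  refine blockSum_le_of_forall_lt_two_mul hk₀ (fun α => by positivity) (by positivity) ?_ hm
    (add_zero m)
  rintro k d hk hk2 rfl
  refine ((hA k hk hk2).blockSum_le (hk₀.trans_le hk) hΛ).trans ?_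
  exact Real.rpow_le_rpow (by positivity) (block_constant_le hk₀ hk hk2) (by positivity)

theorem tupleBound_bootstrapFactor_one {k : ℕ} (hk : 0 < k) :
    TupleBound σ k (bootstrapFactor 1 k) := by
  intro Λ M hΛ
  have hone : ∀ j, 1 ≤ j → j < 2 * 1 → TupleBound σ j 1 := fun j h1 h2 => by
    obtain rfl : j = 1 := by omega
    exact tupleBound_one
  refine le_trans ?_ (by simpa using sum_multinomial_mul_norm_sq_rpow_le one_pos hone hk hΛ)
  gcongr with t
  refine le_mul_of_one_le_left (by positivity) ?_
  exact_mod_cast Nat.multinomial_pos _ _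

theorem bootstrapFactor_one_mono {k l : ℕ} (hkl : k ≤ l) :
    bootstrapFactor 1 k ≤ bootstrapFactor 1 l := by
  unfold bootstrapFactor
  gcongr
  norm_num

end Bootstrap

section Conclusion

theorem abs_eval_le_supNorm {n : ℕ} (P : MvPolynomial (Fin n) ℝ) {x : Fin n → ℝ}
    (hx : ∀ i, |x i| ≤ 1) : |eval x P| ≤ supNorm P := by
  refine le_csSup ⟨∑ α ∈ P.support, |coeff α P|, ?_⟩ ⟨x, hx, rfl⟩
  rintro _ ⟨y, hy, rfl⟩
  rw [eval_eq']
  refine (Finset.abs_sum_le_sum_abs _ _).trans (Finset.sum_le_sum fun α _ => ?_)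
  rw [abs_mul, Finset.abs_prod]
  refine mul_le_of_le_one_right (abs_nonneg _) (Finset.prod_le_one (fun _ _ => abs_nonneg _) ?_)
  exact fun i _ => (abs_pow (y i) _).trans_le (pow_le_one₀ (abs_nonneg _) (hy i))

theorem supNorm_nonneg {n : ℕ} (P : MvPolynomial (Fin n) ℝ) : 0 ≤ supNorm P :=
  Real.sSup_nonneg <| by
    rintro _ ⟨x, -, rfl⟩
    exact abs_nonneg _

theorem BHconst_nonneg (m : ℕ) : 0 ≤ BHconst m := Real.sInf_nonneg fun _ hD => hD.1.le

theorem polydiscBound_polarFunctional_map {n m : ℕ} {P : MvPolynomial (Fin n) ℝ}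
    (hP : P.IsHomogeneous m) :
    PolydiscBound (polarFunctional (map Complex.ofRealHom P)) m (2 ^ m * supNorm P) := by
  refine polydiscBound_of_cube fun x hx => ?_
  have heval : eval (fun i => (x i : ℂ)) (map Complex.ofRealHom P) = (eval x P : ℝ) :=
    (map_eval Complex.ofRealHom x P).symm
  rw [← eval_symbol, symbol_polarFunctional (hP.map _), heval, Complex.norm_real]
  exact abs_eval_le_supNorm P hx

theorem sum_norm_sq_coeff_rpow_le {σ : Type*} [Fintype σ] {k₀ m : ℕ} (hk₀ : 0 < k₀) (hm : k₀ ≤ m)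
    {P : MvPolynomial σ ℂ} (hP : P.IsHomogeneous m) {M : ℝ}
    (hM : PolydiscBound (polarFunctional P) m M) :
    ∑ α ∈ P.support, (‖coeff α P‖ ^ 2) ^ ((m : ℝ) / (m + 1)) ≤
      ((bootstrapFactor k₀ m * bootstrapFactor 1 (2 * k₀) * M) ^ 2) ^ ((m : ℝ) / (m + 1)) := by
  have hA : ∀ k, k₀ ≤ k → k < 2 * k₀ → TupleBound σ k (bootstrapFactor 1 (2 * k₀)) :=
    fun k hk hk2 => (tupleBound_bootstrapFactor_one (hk₀.trans_le hk)).mono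
      (bootstrapFactor_pos (hk₀.trans_le hk)).le (bootstrapFactor_one_mono hk2.le)
  have hs1 : (m : ℝ) / (m + 1) ≤ 1 := div_le_one_of_le₀ (by linarith) (by positivity)
  have hcoeff := sum_norm_sq_coeff_symbol_rpow_le (polarFunctional P) m hs1
  rw [symbol_polarFunctional hP] at hcoeff
  exact hcoeff.trans (sum_multinomial_mul_norm_sq_rpow_le hk₀ hA hm hM)

theorem lpNorm_le_of_sum_sq_rpow_le {n m : ℕ} (hm : 0 < m) {P : MvPolynomial (Fin n) ℝ} {R : ℝ}
    (hR : 0 ≤ R) (h : ∑ α ∈ P.support, (|coeff α P| ^ 2) ^ ((m : ℝ) / (m + 1)) ≤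
      (R ^ 2) ^ ((m : ℝ) / (m + 1))) :
    lpNorm (2 * m / (m + 1)) P ≤ R := by
  have : (0 : ℝ) < m := Nat.cast_pos.2 hm
  have hsq : ∀ x : ℝ, 0 ≤ x → (x ^ 2) ^ ((m : ℝ) / (m + 1)) = x ^ (2 * m / (m + 1) : ℝ) :=
    fun x hx => by rw [← Real.rpow_natCast_mul hx, mul_div_assoc, Nat.cast_ofNat]
  simp only [hsq _ hR, hsq _ (abs_nonneg _)] at h
  calc lpNorm (2 * m / (m + 1)) P
      ≤ (R ^ (2 * m / (m + 1) : ℝ)) ^ (1 / (2 * m / (m + 1)) : ℝ) := by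
        unfold lpNorm
        gcongr
    _ = R := by rw [one_div, Real.rpow_rpow_inv hR (by positivity)]

theorem BHconst_le {k₀ m : ℕ} (hk₀ : 0 < k₀) (hm : k₀ ≤ m) :
    BHconst m ≤ bootstrapFactor k₀ m * bootstrapFactor 1 (2 * k₀) * 2 ^ m := by
  have hm0 : 0 < m := hk₀.trans_le hm
  have hB : 0 < bootstrapFactor k₀ m := bootstrapFactor_pos hm0
  have hA : 0 < bootstrapFactor 1 (2 * k₀) := bootstrapFactor_pos (by omega)
  refine csInf_le ⟨0, fun D hD => hD.1.le⟩ ⟨by positivity, fun n P hP => ?_⟩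
  have hnn := supNorm_nonneg P
  refine lpNorm_le_of_sum_sq_rpow_le hm0 (by positivity) ?_
  have hsum := sum_norm_sq_coeff_rpow_le hk₀ hm (hP.map Complex.ofRealHom)
    (polydiscBound_polarFunctional_map hP)
  rw [support_map_of_injective _ Complex.ofRealHom.injective, ← mul_assoc] at hsum
  simpa only [coeff_map, Complex.ofRealHom_eq_coe, Complex.norm_real, Real.norm_eq_abs] using hsum

theorem tendsto_rpow_inv_natCast {a : ℝ} (ha : a ≠ 0) :
    Tendsto (fun n : ℕ => a ^ (n : ℝ)⁻¹) atTop (nhds 1) := by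
  rw [← Real.rpow_zero a]
  exact (Real.continuousAt_const_rpow ha).tendsto.comp tendsto_inv_atTop_nhds_zero_nat

theorem exists_two_mul_two_rpow_lt {r : ℝ} (hr : 2 < r) :
    ∃ k : ℕ, 0 < k ∧ 2 * (2 : ℝ) ^ (k : ℝ)⁻¹ < r := by
  have hlt : ∀ᶠ k : ℕ in atTop, 2 * (2 : ℝ) ^ (k : ℝ)⁻¹ < r :=
    ((tendsto_rpow_inv_natCast (two_ne_zero' ℝ)).const_mul 2).eventually_lt_const (by linarith)
  exact ((eventually_gt_atTop 0).and hlt).exists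

theorem BHconst_isBigO_pow {r : ℝ} (hr : 2 < r) : BHconst =O[atTop] fun m : ℕ => r ^ m := by
  obtain ⟨k, hk, hkr⟩ := exists_two_mul_two_rpow_lt hr
  set q : ℝ := 2 * 2 ^ (k : ℝ)⁻¹ with hq
  have hbound : BHconst =O[atTop] fun m : ℕ => (m : ℝ) ^ (3 * k) * q ^ m := by
    refine .of_bound (Real.exp 1 * bootstrapFactor 1 (2 * k)) ?_
    filter_upwards [eventually_ge_atTop k] with m hm
    rw [Real.norm_of_nonneg (BHconst_nonneg m), Real.norm_of_nonneg (by positivity)]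
    refine (BHconst_le hk hm).trans_eq ?_
    have hpow : (2 : ℝ) ^ ((m : ℝ) / k) = (2 ^ (k : ℝ)⁻¹) ^ m := by
      rw [← Real.rpow_mul_natCast two_pos.le, inv_mul_eq_div]
    rw [hq, mul_pow, ← hpow, bootstrapFactor]
    ring
  refine hbound.trans (isLittleO_pow_const_mul_const_pow_const_pow_of_norm_lt _ ?_).isBigO
  rwa [Real.norm_of_nonneg (by positivity)]

theorem exists_BHconst_le_mul_pow {r : ℝ} (hr : 2 < r) :
    ∃ C : ℝ, 0 < C ∧ ∀ m : ℕ, BHconst m ≤ C * r ^ m := by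
  have hr0 : 0 < r := two_pos.trans hr
  obtain ⟨C, hC, h⟩ := Asymptotics.bound_of_isBigO_nat_atTop (BHconst_isBigO_pow hr)
  refine ⟨C, hC, fun m => ?_⟩
  simpa [abs_of_pos hr0] using (le_abs_self _).trans (h (pow_ne_zero m hr0.ne'))

theorem limsup_rpow_inv_le {a : ℕ → ℝ} (ha : ∀ m, 0 ≤ a m) {C r : ℝ} (hC : 0 < C) (hr : 0 ≤ r)
    (h : ∀ᶠ m in atTop, a m ≤ C * r ^ m) :
    limsup (fun m : ℕ => a m ^ ((m : ℝ)⁻¹)) atTop ≤ r := by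
  have hlim : Tendsto (fun m : ℕ => C ^ ((m : ℝ)⁻¹) * r) atTop (nhds r) := by
    simpa using (tendsto_rpow_inv_natCast hC.ne').mul_const r
  refine (limsup_le_limsup ?_ ?_ hlim.isBoundedUnder_le).trans_eq hlim.limsup_eq
  · filter_upwards [h, eventually_ne_atTop 0] with m hm hm0
    calc a m ^ ((m : ℝ)⁻¹) ≤ (C * r ^ m) ^ ((m : ℝ)⁻¹) := by
          gcongr
          exact ha m
      _ = C ^ ((m : ℝ)⁻¹) * r := by
          rw [Real.mul_rpow hC.le (by positivity), Real.pow_rpow_inv_natCast hr hm0]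
  · exact isCoboundedUnder_le_of_le atTop fun m => Real.rpow_nonneg (ha m) _

end Conclusion

end BohnenblustHille

/-- `limsup_{m→∞} D_{ℝ,m}^{1/m} ≤ 2`; equivalently, for every `ε > 0` there is a
constant `C_ε > 0` with `D_{ℝ,m} ≤ C_ε (2+ε)^m` for all positive integers `m`. -/
theorem real_BH_limsup_le_two :
    limsup (fun m : ℕ => BHconst m ^ ((m : ℝ)⁻¹)) atTop ≤ 2 ∧
    ∀ ε : ℝ, 0 < ε → ∃ C : ℝ, 0 < C ∧ ∀ m : ℕ, 0 < m → BHconst m ≤ C * (2 + ε) ^ m := by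
  have hgrowth : ∀ ε : ℝ, 0 < ε → ∃ C : ℝ, 0 < C ∧ ∀ m : ℕ, BHconst m ≤ C * (2 + ε) ^ m :=
    fun ε hε => BohnenblustHille.exists_BHconst_le_mul_pow (by linarith)
  constructor
  · refine le_of_forall_pos_le_add fun ε hε => ?_
    obtain ⟨C, hC, h⟩ := hgrowth ε hε
    exact BohnenblustHille.limsup_rpow_inv_le BohnenblustHille.BHconst_nonneg hC (by positivity)
      (.of_forall h)
  · intro ε hε
    obtain ⟨C, hC, h⟩ := hgrowth ε hε
    exact ⟨C, hC, fun m _ => h m⟩
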